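/- Let J be a graph on Z with W ⊊ Z such that J[W,Z] is r-leading and J is (r/2)-sparse. Then for any [W,Z]-tree T, the labeled expectation satisfies ñ_r(T[W,V(T)]) := n^{v(W,V(T))} r^{e(W,V(T))} ≤ μ_r(W,Z) · min{v(W,Z), 16 log₂ n}^{e_T}, where e_T = e(W,V(T)). -/

import Mathlib

open SimpleGraph

/-- Expected number of copies of `F` in `G(n,p)`: `(n)_{v_F} p^{e_F} / aut(F)`. -/
noncomputable def expCount (n : ℕ) (p : ℝ) {β : Type} [Fintype β] (F : SimpleGraph β) : ℝ :=
  (n.descFactorial (Fintype.card β)) * p ^ (Nat.card F.edgeSet) / (Nat.card (F ≃g F))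

/-- `J` is `q`-sparse (w.r.t. ground-set size `n`): every subgraph `I ⊆ J` has
`(n)_{v_I} q^{e_I} / aut(I) ≥ 1`. -/
def ExpSparse (n : ℕ) (q : ℝ) {β : Type} (J : SimpleGraph β) : Prop :=
  ∀ I : J.Subgraph, 1 ≤ (n.descFactorial (Nat.card I.verts)) * q ^ (Nat.card I.edgeSet) /
      (Nat.card (I.coe ≃g I.coe))

/-- `N(H,F)`: the number of subgraphs of `H` isomorphic to `F`. -/
noncomputable def copyCount {α β : Type} (H : SimpleGraph α) (F : SimpleGraph β) : ℕ :=
  Nat.card {H' : H.Subgraph // Nonempty (F ≃g H'.coe)}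

/-- Edge set of the rooted graph `J[W,Z]`: edges of `J` inside `Z` not inside `W`. -/
def rootedEdges {V : Type} (J : SimpleGraph V) (W Z : Finset V) : Set (Sym2 V) :=
  {e | e ∈ J.edgeSet ∧ (∀ x ∈ e, x ∈ Z) ∧ ¬ ∀ x ∈ e, x ∈ W}

/-- `e(W,Z)`: the number of edges of `J[W,Z]`. -/
noncomputable def eWZ {V : Type} (J : SimpleGraph V) (W Z : Finset V) : ℕ :=
  Nat.card (rootedEdges J W Z)

/-- `aut(W,Z)`: the number of automorphisms of `J[W,Z]` fixing `W` pointwise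
(realized as permutations of the ground set fixing everything outside `Z`). -/
noncomputable def autWZ {V : Type} (J : SimpleGraph V) (W Z : Finset V) : ℕ :=
  Nat.card {σ : Equiv.Perm V // (∀ v ∈ W, σ v = v) ∧ (∀ v, v ∉ Z → σ v = v) ∧
     ∀ e, e ∈ rootedEdges J W Z ↔ Sym2.map σ e ∈ rootedEdges J W Z}

/-- `μ_p(W,Z) = n^{v(W,Z)} p^{e(W,Z)} / aut(W,Z)`. -/
noncomputable def mu {V : Type} [DecidableEq V] (n : ℕ) (p : ℝ) (J : SimpleGraph V)
    (W Z : Finset V) : ℝ :=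
  (n : ℝ) ^ ((Z \ W).card) * p ^ (eWZ J W Z) / (autWZ J W Z)

/-- `J[W,Z]` is `p`-leading: `μ_p(Y,Z) < 1` for all `W ⊊ Y ⊊ Z`. -/
def Leading {V : Type} [DecidableEq V] (n : ℕ) (p : ℝ) (J : SimpleGraph V)
    (W Z : Finset V) : Prop :=
  ∀ Y : Finset V, W ⊂ Y → Y ⊂ Z → mu n p J Y Z < 1

/-!
The first copy has labeled expectation `aut(W,Z) * μ_r(W,Z)`. A copy attached to a tree along the
vertices `U`, where `W ⊊ U ⊆ Z`, multiplies the labeled expectation by at most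
`n ^ v(U,Z) * r ^ e(U,Z)`, which is less than `aut(U,Z)` by the leading property when `U ≠ Z`. So
it is enough to bound automorphism numbers by `K ^ e`, where `K = min (v(W,Z)) (2 log₂ n)`.

Let `q` be the number of roots lying on edges of `J[W,Z]`. Applied to the graph of these edges,
sparsity at density `r / 2` gives `2 ^ e(W,Z) ≤ n ^ q * μ_r(W,Z)`. Hence `q > 0` if `μ_r(W,Z) < 1`,
and `e(W,Z) ≤ (q + 1) log₂ n` if `μ_r(W,Z) ≤ n`, so if `q > 0` then by averaging some root `w` has
at least one and at most `2 log₂ n` neighbours outside `W`. The orbit of such a neighbour `z` under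
the automorphisms fixing `W` consists of neighbours of `w`, so by orbit–stabilizer adding `z` to the
roots costs a factor at most `K` in the automorphism number, while it removes the edge `wz`.
Iterating yields `aut(W,Z) ≤ K ^ e(W,Z)`.
-/

section RootedEdges

variable {V : Type} {J : SimpleGraph V} {W W' Z : Finset V}

theorem eWZ_eq_ncard : eWZ J W Z = (rootedEdges J W Z).ncard := rfl

theorem mk_mem_rootedEdges {a b : V} :
    s(a, b) ∈ rootedEdges J W Z ↔ J.Adj a b ∧ (a ∈ Z ∧ b ∈ Z) ∧ ¬(a ∈ W ∧ b ∈ W) := by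
  simp only [rootedEdges, Set.mem_ofPred_eq, Sym2.ball, mem_edgeSet]

variable (J W Z) in
theorem rootedEdges_finite : (rootedEdges J W Z).Finite :=
  Z.sym2.finite_toSet.subset fun _ he ↦ Finset.mem_sym2_iff.2 he.2.1

theorem rootedEdges_anti (h : W ⊆ W') : rootedEdges J W' Z ⊆ rootedEdges J W Z :=
  fun _ ⟨hJ, hZ, hW'⟩ ↦ ⟨hJ, hZ, fun hW ↦ hW' fun x hx ↦ h (hW x hx)⟩

theorem rootedEdges_eq_empty_of_card_le_one (hZ : Z.card ≤ 1) : rootedEdges J W Z = ∅ := by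
  refine Set.eq_empty_of_forall_notMem fun e ↦ e.ind fun a b he ↦ ?_
  obtain ⟨hab, ⟨ha, hb⟩, -⟩ := mk_mem_rootedEdges.1 he
  exact hab.ne (Finset.card_le_one.1 hZ a ha b hb)

theorem injOn_map_rootedEdges {β : Type*} {f : V → β} (hf : Set.InjOn f Z) :
    Set.InjOn (Sym2.map f) (rootedEdges J W Z) := by
  rintro ⟨a, a'⟩ ha ⟨b, b'⟩ hb hab
  obtain ⟨-, ⟨ha, ha'⟩, -⟩ := mk_mem_rootedEdges.1 ha
  obtain ⟨-, ⟨hb, hb'⟩, -⟩ := mk_mem_rootedEdges.1 hb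
  rcases Sym2.eq_iff.1 hab with ⟨h, h'⟩ | ⟨h, h'⟩
  · exact Sym2.eq_iff.2 (.inl ⟨hf ha hb h, hf ha' hb' h'⟩)
  · exact Sym2.eq_iff.2 (.inr ⟨hf ha hb' h, hf ha' hb h'⟩)

theorem ncard_image_map_rootedEdges {β : Type*} {f : V → β} (hf : Set.InjOn f Z) :
    (Sym2.map f '' rootedEdges J W Z).ncard = eWZ J W Z :=
  (injOn_map_rootedEdges hf).ncard_image

theorem eWZ_anti (h : W ⊆ W') : eWZ J W' Z ≤ eWZ J W Z :=
  Set.ncard_le_ncard (rootedEdges_anti h) (rootedEdges_finite J W Z)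

variable [DecidableEq V] {w z : V}

theorem eWZ_insert_lt (hWZ : W ⊆ Z) (hw : w ∈ W) (hz : z ∈ Z \ W) (hwz : J.Adj w z) :
    eWZ J (insert z W) Z < eWZ J W Z := by
  obtain ⟨hzZ, hzW⟩ := Finset.mem_sdiff.1 hz
  refine Set.ncard_lt_ncard ?_ (rootedEdges_finite J W Z)
  refine (Set.ssubset_iff_of_subset (rootedEdges_anti (Finset.subset_insert z W))).2
    ⟨s(w, z), mk_mem_rootedEdges.2 ⟨hwz, ⟨hWZ hw, hzZ⟩, fun h ↦ hzW h.2⟩, fun h ↦ ?_⟩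
  exact (mk_mem_rootedEdges.1 h).2.2 ⟨Finset.mem_insert_of_mem hw, Finset.mem_insert_self z W⟩

theorem mem_of_mem_rootedEdges_erase {e : Sym2 V} (he : e ∈ rootedEdges J (Z.erase z) Z) :
    z ∈ e := by
  by_contra hze
  exact he.2.2 fun x hx ↦ Finset.mem_erase.2 ⟨fun h ↦ hze (h ▸ hx), he.2.1 x hx⟩

theorem card_sdiff_insert_add_one (hz : z ∈ Z \ W) :
    (Z \ insert z W).card + 1 = (Z \ W).card := by
  rw [Finset.sdiff_insert, Finset.card_erase_add_one hz]

theorem insert_ssubset_of_one_lt_card_sdiff (hWZ : W ⊆ Z) (hz : z ∈ Z \ W)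
    (h : 1 < (Z \ W).card) : insert z W ⊂ Z := by
  refine (Finset.insert_subset (Finset.mem_sdiff.1 hz).1 hWZ).ssubset_of_ne fun hins ↦ ?_
  have hcard := card_sdiff_insert_add_one hz
  rw [hins, Finset.sdiff_self, Finset.card_empty] at hcard
  omega

end RootedEdges

section RootedAut

variable {V : Type} {J : SimpleGraph V} {W W' Z : Finset V} {σ : Equiv.Perm V} {v : V}

variable (J W Z) in
/-- The automorphism group of the rooted graph `J[W,Z]`, whose order is `autWZ J W Z`. Its elements
are extended by the identity outside `Z`, so that the groups for all `W` and `Z` live in one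
permutation group. -/
def rootedAut : Subgroup (Equiv.Perm V) where
  carrier := {σ | (∀ v ∈ W, σ v = v) ∧ (∀ v, v ∉ Z → σ v = v) ∧
    ∀ e, e ∈ rootedEdges J W Z ↔ Sym2.map σ e ∈ rootedEdges J W Z}
  one_mem' := ⟨fun _ _ ↦ rfl, fun _ _ ↦ rfl, fun e ↦ by rw [Equiv.Perm.coe_one, Sym2.map_id, id]⟩
  mul_mem' := by
    rintro σ τ ⟨hσW, hσZ, hσ⟩ ⟨hτW, hτZ, hτ⟩
    refine ⟨fun v hv ↦ ?_, fun v hv ↦ ?_, fun e ↦ ?_⟩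
    · rw [Equiv.Perm.mul_apply, hτW v hv, hσW v hv]
    · rw [Equiv.Perm.mul_apply, hτZ v hv, hσZ v hv]
    · rw [Equiv.Perm.coe_mul, ← Sym2.map_map, ← hσ, ← hτ]
  inv_mem' := by
    rintro σ ⟨hσW, hσZ, hσ⟩
    refine ⟨fun v hv ↦ ?_, fun v hv ↦ ?_, fun e ↦ ?_⟩
    · rw [Equiv.Perm.inv_eq_iff_eq, hσW v hv]
    · rw [Equiv.Perm.inv_eq_iff_eq, hσZ v hv]
    · rw [hσ (Sym2.map _ e), Sym2.map_map, ← Equiv.Perm.coe_mul, mul_inv_cancel,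
        Equiv.Perm.coe_one, Sym2.map_id, id]

theorem autWZ_eq_card : autWZ J W Z = Nat.card (rootedAut J W Z) := rfl

instance : Finite (rootedAut J W Z) := by
  classical
  have hfix : Finite {σ : Equiv.Perm V // ∀ v, v ∉ Z → σ v = v} :=
    .of_equiv _ (Equiv.Perm.subtypeEquivSubtypePerm (· ∈ Z))
  exact Set.Finite.subset hfix fun σ hσ ↦ hσ.2.1

theorem autWZ_pos : 0 < autWZ J W Z :=
  Nat.card_pos (α := rootedAut J W Z)

theorem apply_iff_of_forall_fixed {p : V → Prop} (hσ : ∀ v, p v → σ v = v) : p (σ v) ↔ p v :=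
  ⟨fun hv ↦ σ.injective (hσ _ hv) ▸ hv, fun hv ↦ (hσ v hv).symm ▸ hv⟩

theorem apply_mem_left_iff (hσ : σ ∈ rootedAut J W Z) : σ v ∈ W ↔ v ∈ W :=
  apply_iff_of_forall_fixed (p := (· ∈ W)) hσ.1

theorem apply_mem_right_iff (hσ : σ ∈ rootedAut J W Z) : σ v ∈ Z ↔ v ∈ Z :=
  not_iff_not.1 (apply_iff_of_forall_fixed (p := (· ∉ Z)) hσ.2.1)

theorem mem_rootedAut_iff_of_subset (h : W ⊆ W') :
    σ ∈ rootedAut J W' Z ↔ σ ∈ rootedAut J W Z ∧ ∀ v ∈ W', σ v = v := by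
  suffices hedges : (∀ v ∈ W', σ v = v) →
      ∀ e, ((e ∈ rootedEdges J W' Z ↔ Sym2.map σ e ∈ rootedEdges J W' Z) ↔
        (e ∈ rootedEdges J W Z ↔ Sym2.map σ e ∈ rootedEdges J W Z)) by
    constructor
    · rintro ⟨hW', hZ, hσ⟩
      exact ⟨⟨fun v hv ↦ hW' v (h hv), hZ, fun e ↦ (hedges hW' e).1 (hσ e)⟩, hW'⟩
    · rintro ⟨⟨-, hZ, hσ⟩, hW'⟩
      exact ⟨hW', hZ, fun e ↦ (hedges hW' e).2 (hσ e)⟩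
  rintro hσ ⟨a, b⟩
  have hW' (v : V) : σ v ∈ W' ↔ v ∈ W' := apply_iff_of_forall_fixed (p := (· ∈ W')) hσ
  have hW (v : V) : σ v ∈ W ↔ v ∈ W :=
    apply_iff_of_forall_fixed (p := (· ∈ W)) fun u hu ↦ hσ u (h hu)
  by_cases hab : a ∈ W' ∧ b ∈ W'
  · simp only [Sym2.map_mk, hσ a hab.1, hσ b hab.2]
  · have habW : ¬(a ∈ W ∧ b ∈ W) := fun hab' ↦ hab ⟨h hab'.1, h hab'.2⟩
    simp only [Sym2.map_mk, mk_mem_rootedEdges, hW', hW, hab, habW]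

theorem autWZ_anti (h : W ⊆ W') : autWZ J W' Z ≤ autWZ J W Z :=
  Subgroup.card_le_of_le fun _ hσ ↦ ((mem_rootedAut_iff_of_subset h).1 hσ).1

variable [DecidableEq V] {z : V}

theorem apply_mem_sdiff_iff (hσ : σ ∈ rootedAut J W Z) : σ v ∈ Z \ W ↔ v ∈ Z \ W := by
  rw [Finset.mem_sdiff, Finset.mem_sdiff, apply_mem_right_iff hσ, apply_mem_left_iff hσ]

theorem mem_rootedAut_insert :
    σ ∈ rootedAut J (insert z W) Z ↔ σ ∈ rootedAut J W Z ∧ σ z = z := by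
  rw [mem_rootedAut_iff_of_subset (Finset.subset_insert z W), Finset.forall_mem_insert]
  exact ⟨fun h ↦ ⟨h.1, h.2.1⟩, fun h ↦ ⟨h.1, h.2, h.1.1⟩⟩

theorem card_stabilizer_rootedAut :
    Nat.card (MulAction.stabilizer (rootedAut J W Z) z) = autWZ J (insert z W) Z :=
  Nat.card_congr <| (Equiv.subtypeSubtypeEquivSubtypeInter (· ∈ rootedAut J W Z) (· z = z)).trans
    (Equiv.subtypeEquivRight fun _ ↦ mem_rootedAut_insert.symm)

theorem autWZ_eq_ncard_orbit_mul :
    autWZ J W Z = (MulAction.orbit (rootedAut J W Z) z).ncard * autWZ J (insert z W) Z := by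
  rw [← card_stabilizer_rootedAut, ← MulAction.index_stabilizer, Subgroup.index_mul_card,
    autWZ_eq_card]

theorem autWZ_le_card_mul_autWZ_insert {S : Finset V} (hS : ∀ σ ∈ rootedAut J W Z, σ z ∈ S) :
    autWZ J W Z ≤ S.card * autWZ J (insert z W) Z := by
  rw [autWZ_eq_ncard_orbit_mul, ← Set.ncard_coe_finset]
  refine Nat.mul_le_mul_right _ (Set.ncard_le_ncard ?_ S.finite_toSet)
  rintro _ ⟨σ, rfl⟩
  exact hS σ σ.2

theorem autWZ_le_card_sdiff_mul_autWZ_insert (hz : z ∈ Z \ W) :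
    autWZ J W Z ≤ (Z \ W).card * autWZ J (insert z W) Z :=
  autWZ_le_card_mul_autWZ_insert fun _ hσ ↦ (apply_mem_sdiff_iff hσ).2 hz

theorem autWZ_eq_one_of_card_sdiff_le_one (h : (Z \ W).card ≤ 1) : autWZ J W Z = 1 := by
  suffices hbot : rootedAut J W Z = ⊥ by rw [autWZ_eq_card, hbot, Subgroup.card_bot]
  refine (Subgroup.eq_bot_iff_forall _).2 fun σ hσ ↦ Equiv.ext fun v ↦ ?_
  by_cases hv : v ∈ Z \ W
  · exact Finset.card_le_one.1 h _ ((apply_mem_sdiff_iff hσ).2 hv) _ hv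
  · rw [Finset.mem_sdiff, not_and_not_right] at hv
    by_cases hvZ : v ∈ Z
    · exact hσ.1 v (hv hvZ)
    · exact hσ.2.1 v hvZ

end RootedAut

section Mu

variable {V : Type} [DecidableEq V] {n : ℕ} {r : ℝ} {J : SimpleGraph V} {W Z : Finset V} {z : V}

theorem mu_lt_one_iff : mu n r J W Z < 1 ↔ (n : ℝ) ^ (Z \ W).card * r ^ eWZ J W Z < autWZ J W Z :=
  div_lt_one (mod_cast autWZ_pos)

theorem mu_le_mul_mu_insert (hr0 : 0 ≤ r) (hr1 : r ≤ 1) (hz : z ∈ Z \ W) :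
    mu n r J W Z ≤ n * mu n r J (insert z W) Z := by
  have hW : W ⊆ insert z W := Finset.subset_insert z W
  rw [mu, mu, ← card_sdiff_insert_add_one hz, pow_succ', mul_assoc, mul_div_assoc]
  gcongr (n : ℝ) * (_ * ?_ / ?_)
  · exact mod_cast autWZ_pos
  · exact pow_le_pow_of_le_one hr0 hr1 (eWZ_anti hW)
  · exact mod_cast autWZ_anti hW

theorem eWZ_erase_ne_zero (hn : 0 < n) (hz : z ∈ Z) (hmu : mu n r J (Z.erase z) Z < 1) :
    eWZ J (Z.erase z) Z ≠ 0 := by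
  intro he
  have hcard : (Z \ Z.erase z).card = 1 := by
    rw [Finset.sdiff_erase_self hz, Finset.card_singleton]
  rw [mu_lt_one_iff, hcard, he, autWZ_eq_one_of_card_sdiff_le_one hcard.le, pow_one, pow_zero,
    mul_one] at hmu
  exact hmu.not_ge (mod_cast hn)

theorem Leading.card_sdiff_le_two_mul_eWZ (hn : 0 < n) (hWZ : W ⊆ Z) (hcard : 1 < (Z \ W).card)
    (hlead : Leading n r J W Z) : (Z \ W).card ≤ 2 * eWZ J W Z := by
  have hcover : Z \ W ⊆ (rootedEdges_finite J W Z).toFinset.biUnion Sym2.toFinset := by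
    intro z hz
    obtain ⟨hzZ, hzW⟩ := Finset.mem_sdiff.1 hz
    have hWz : W ⊆ Z.erase z := fun x hx ↦
      Finset.mem_erase.2 ⟨fun h ↦ hzW (h ▸ hx), hWZ hx⟩
    have hne : W ≠ Z.erase z := fun h ↦ by
      rw [h, Finset.sdiff_erase_self hzZ, Finset.card_singleton] at hcard
      exact hcard.false
    obtain ⟨e, he⟩ := Set.nonempty_of_ncard_ne_zero <| eWZ_erase_ne_zero hn hzZ <|
      hlead _ (hWz.ssubset_of_ne hne) (Finset.erase_ssubset hzZ)
    exact Finset.mem_biUnion.2 ⟨e, (Set.Finite.mem_toFinset _).2 (rootedEdges_anti hWz he),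
      Sym2.mem_toFinset.2 (mem_of_mem_rootedEdges_erase he)⟩
  rw [eWZ_eq_ncard, Set.ncard_eq_toFinset_card _ (rootedEdges_finite J W Z), mul_comm]
  refine (Finset.card_le_card hcover).trans (Finset.card_biUnion_le_card_mul _ _ _ fun e _ ↦ ?_)
  rw [Sym2.card_toFinset]
  split_ifs <;> omega

end Mu

section Attachment

variable {V : Type} [DecidableEq V] {J : SimpleGraph V} {W Z : Finset V} {w x z : V}

open Classical in
variable (J W Z) in
/-- The neighbours of `w` among the non-root vertices of `J[W,Z]`. -/
noncomputable def outerNeighbors (w : V) : Finset V := {z ∈ Z \ W | J.Adj w z}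

variable (J W Z) in
/-- The roots of `J[W,Z]` that lie on one of its edges. -/
noncomputable def attachment : Finset V := {w ∈ W | (outerNeighbors J W Z w).Nonempty}

theorem mem_outerNeighbors : z ∈ outerNeighbors J W Z w ↔ z ∈ Z \ W ∧ J.Adj w z := by
  simp only [outerNeighbors, Finset.mem_filter]

theorem mem_attachment : w ∈ attachment J W Z ↔ w ∈ W ∧ ∃ z ∈ Z \ W, J.Adj w z := by
  rw [attachment, Finset.mem_filter]
  simp only [Finset.Nonempty, mem_outerNeighbors]

theorem apply_mem_outerNeighbors {σ : Equiv.Perm V} (hσ : σ ∈ rootedAut J W Z) (hWZ : W ⊆ Z)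
    (hw : w ∈ W) (hz : z ∈ outerNeighbors J W Z w) : σ z ∈ outerNeighbors J W Z w := by
  obtain ⟨hz, hwz⟩ := mem_outerNeighbors.1 hz
  obtain ⟨hzZ, hzW⟩ := Finset.mem_sdiff.1 hz
  have hedge := (hσ.2.2 s(w, z)).1 (mk_mem_rootedEdges.2 ⟨hwz, ⟨hWZ hw, hzZ⟩, fun h ↦ hzW h.2⟩)
  rw [Sym2.map_mk, hσ.1 w hw, mk_mem_rootedEdges] at hedge
  exact mem_outerNeighbors.2 ⟨(apply_mem_sdiff_iff hσ).2 hz, hedge.1⟩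

theorem sum_card_outerNeighbors_le (hWZ : W ⊆ Z) :
    ∑ w ∈ W, (outerNeighbors J W Z w).card ≤ eWZ J W Z := by
  rw [← Finset.card_sigma, eWZ_eq_ncard, ← Set.ncard_coe_finset]
  refine Set.ncard_le_ncard_of_injOn (fun p ↦ s(p.1, p.2)) ?_ ?_
    (rootedEdges_finite J W Z)
  · rintro ⟨w, z⟩ hp
    obtain ⟨hw, hz⟩ := Finset.mem_sigma.1 hp
    obtain ⟨hz, hwz⟩ := mem_outerNeighbors.1 hz
    obtain ⟨hzZ, hzW⟩ := Finset.mem_sdiff.1 hz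
    exact mk_mem_rootedEdges.2 ⟨hwz, ⟨hWZ hw, hzZ⟩, fun h ↦ hzW h.2⟩
  · rintro ⟨w, z⟩ hp ⟨w', z'⟩ hp' heq
    rcases Sym2.eq_iff.1 heq with ⟨rfl, rfl⟩ | ⟨rfl, rfl⟩
    · rfl
    · have hz' := (mem_outerNeighbors.1 (Finset.mem_sigma.1 hp').2).1
      exact absurd (Finset.mem_sigma.1 hp).1 (Finset.mem_sdiff.1 hz').2

theorem exists_attachment_card_outerNeighbors_le {L : ℝ} (hWZ : W ⊆ Z)
    (hq : (attachment J W Z).Nonempty)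
    (he : (eWZ J W Z : ℝ) ≤ ((attachment J W Z).card + 1) * L) :
    ∃ w ∈ attachment J W Z, ((outerNeighbors J W Z w).card : ℝ) ≤ 2 * L := by
  have hq1 : (1 : ℝ) ≤ (attachment J W Z).card := mod_cast hq.card_pos
  have hL : 0 ≤ L := nonneg_of_mul_nonneg_right ((Nat.cast_nonneg _).trans he) (by linarith)
  have hsum : (∑ w ∈ attachment J W Z, (outerNeighbors J W Z w).card : ℝ) ≤ eWZ J W Z :=
    mod_cast (Finset.sum_le_sum_of_subset (Finset.filter_subset _ _)).trans
      (sum_card_outerNeighbors_le hWZ)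
  refine Finset.exists_le_of_sum_le hq (hsum.trans (he.trans ?_))
  rw [Finset.sum_const, nsmul_eq_mul]
  nlinarith only [mul_le_mul_of_nonneg_right hq1 hL]

end Attachment

section RootedSubgraph

variable {V : Type} [DecidableEq V] {J : SimpleGraph V} {W Z : Finset V}

variable (J W Z) in
/-- The rooted graph `J[W,Z]` as a subgraph of `J[Z]`. Roots lying on no rooted edge are left out:
each vertex of this subgraph costs a factor `n` in the sparsity condition. -/
def rootedSubgraph : (J.induce (Z : Set V)).Subgraph where
  verts := {x | (x : V) ∈ (Z \ W) ∪ attachment J W Z}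
  Adj a b := s((a : V), (b : V)) ∈ rootedEdges J W Z
  adj_sub h := (mk_mem_rootedEdges.1 h).1
  edge_vert {a b} h := by
    obtain ⟨hab, ⟨ha, hb⟩, hW⟩ := mk_mem_rootedEdges.1 h
    simp only [Set.mem_ofPred_eq, Finset.mem_union, Finset.mem_sdiff, mem_attachment]
    by_cases haW : (a : V) ∈ W
    · exact .inr ⟨haW, b, ⟨hb, fun hbW ↦ hW ⟨haW, hbW⟩⟩, hab⟩
    · exact .inl ⟨ha, haW⟩
  symm := ⟨fun a b h ↦ by rwa [Sym2.eq_swap]⟩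

theorem card_rootedSubgraph_verts (hWZ : W ⊆ Z) :
    Nat.card (rootedSubgraph J W Z).verts = (Z \ W).card + (attachment J W Z).card := by
  have hdisj : Disjoint (Z \ W) (attachment J W Z) :=
    Finset.sdiff_disjoint.mono_right (Finset.filter_subset _ _)
  have himage : Subtype.val '' (rootedSubgraph J W Z).verts =
      (((Z \ W) ∪ attachment J W Z : Finset V) : Set V) := by
    refine Subtype.image_preimage_val .. |>.trans (Set.inter_eq_right.2 fun x hx ↦ ?_)
    rcases Finset.mem_union.1 hx with hx | hx
    · exact (Finset.mem_sdiff.1 hx).1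
    · exact hWZ (mem_attachment.1 hx).1
  rw [Nat.card_coe_set_eq, ← Set.ncard_image_of_injective _ Subtype.val_injective, himage,
    Set.ncard_coe_finset, Finset.card_union_of_disjoint hdisj]

theorem card_rootedSubgraph_edgeSet :
    Nat.card (rootedSubgraph J W Z).edgeSet = eWZ J W Z := by
  have himage : Sym2.map Subtype.val '' (rootedSubgraph J W Z).edgeSet = rootedEdges J W Z := by
    ext ⟨a, b⟩
    constructor
    · rintro ⟨⟨a', b'⟩, he, heq⟩
      exact heq ▸ he
    · intro he
      obtain ⟨-, ⟨ha, hb⟩, -⟩ := mk_mem_rootedEdges.1 he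
      exact ⟨s(⟨a, ha⟩, ⟨b, hb⟩), he, rfl⟩
  rw [Nat.card_coe_set_eq, ← Set.ncard_image_of_injective _ (Sym2.map.injective
    Subtype.val_injective), himage, eWZ_eq_ncard]

/-- The action of a rooted automorphism on `rootedSubgraph J W Z`, which exhibits `rootedAut J W Z`
as a group of automorphisms of that subgraph. -/
def rootedAutRestrict (σ : rootedAut J W Z) :
    (rootedSubgraph J W Z).coe ≃g (rootedSubgraph J W Z).coe where
  toEquiv := (σ.1.subtypePerm (p := (· ∈ (Z : Set V))) fun _ ↦ apply_mem_right_iff σ.2).subtypePerm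
    (p := (· ∈ (rootedSubgraph J W Z).verts)) fun x ↦ by
      have hsdiff := apply_mem_sdiff_iff (v := (x : V)) σ.2
      have hattach : σ.1 x ∈ attachment J W Z ↔ (x : V) ∈ attachment J W Z := by
        refine apply_iff_of_forall_fixed (p := (· ∈ attachment J W Z)) fun v hv ↦ ?_
        exact σ.2.1 v (mem_attachment.1 hv).1
      simp only [rootedSubgraph, Set.mem_ofPred_eq, Finset.mem_union, ← hsdiff, ← hattach,
        Equiv.Perm.subtypePerm_apply]
  map_rel_iff' := (σ.2.2.2 s(_, _)).symm

theorem rootedAutRestrict_injective :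
    Function.Injective (rootedAutRestrict (J := J) (W := W) (Z := Z)) := by
  intro σ τ h
  refine Subtype.ext (Equiv.ext fun v ↦ ?_)
  by_cases hv : v ∈ Z \ W
  · have hvZ : v ∈ (Z : Set V) := (Finset.mem_sdiff.1 hv).1
    have happly := DFunLike.congr_fun h ⟨⟨v, hvZ⟩, Finset.mem_union_left _ hv⟩
    exact congrArg (fun x ↦ (x.1 : V)) happly
  · rw [Finset.mem_sdiff, not_and_not_right] at hv
    by_cases hvZ : v ∈ Z
    · rw [σ.2.1 v (hv hvZ), τ.2.1 v (hv hvZ)]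
    · rw [σ.2.2.1 v hvZ, τ.2.2.1 v hvZ]

theorem autWZ_le_card_rootedSubgraph_aut :
    autWZ J W Z ≤ Nat.card ((rootedSubgraph J W Z).coe ≃g (rootedSubgraph J W Z).coe) :=
  have : Finite ((rootedSubgraph J W Z).coe ≃g (rootedSubgraph J W Z).coe) :=
    .of_injective _ RelIso.toEquiv_injective
  Nat.card_le_card_of_injective rootedAutRestrict rootedAutRestrict_injective

end RootedSubgraph

section Sparse

theorem ExpSparse.card_le {β : Type} {n : ℕ} {q : ℝ} {J : SimpleGraph β}
    (hJ : ExpSparse n q J) : Nat.card β ≤ n := by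
  by_contra! hn
  have htop := hJ ⊤
  have hcard : Nat.card (⊤ : J.Subgraph).verts = Nat.card β := Nat.card_univ
  rw [hcard, Nat.descFactorial_eq_zero_iff_lt.2 hn, Nat.cast_zero, zero_mul, zero_div] at htop
  exact one_pos.not_ge htop

variable {V : Type} {n : ℕ} {r : ℝ} {J : SimpleGraph V} {W Z : Finset V}

theorem ExpSparse.card_finset_le (hJ : ExpSparse n r (J.induce (Z : Set V))) : Z.card ≤ n := by
  simpa only [Nat.card_coe_set_eq, Set.ncard_coe_finset] using hJ.card_le

theorem ExpSparse.pos_of_nonempty (hJ : ExpSparse n r (J.induce (Z : Set V)))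
    (hZ : Z.Nonempty) : 0 < n :=
  hZ.card_pos.trans_le hJ.card_finset_le

variable [DecidableEq V]

theorem ExpSparse.two_pow_eWZ_le (hr0 : 0 ≤ r) (hWZ : W ⊆ Z)
    (hJ : ExpSparse n (r / 2) (J.induce (Z : Set V))) :
    (2 : ℝ) ^ eWZ J W Z ≤ (n : ℝ) ^ (attachment J W Z).card * mu n r J W Z := by
  have hsub := hJ (rootedSubgraph J W Z)
  set A : ℕ := Nat.card ((rootedSubgraph J W Z).coe ≃g (rootedSubgraph J W Z).coe)
  rw [card_rootedSubgraph_verts hWZ, card_rootedSubgraph_edgeSet] at hsub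
  set v := (Z \ W).card
  set q := (attachment J W Z).card
  set e := eWZ J W Z
  calc (2 : ℝ) ^ e ≤ 2 ^ e * (n.descFactorial (v + q) * (r / 2) ^ e / A) :=
        le_mul_of_one_le_right (by positivity) hsub
    _ = n.descFactorial (v + q) * r ^ e / A := by rw [div_pow]; field_simp
    _ ≤ n ^ (v + q) * r ^ e / autWZ J W Z := by
        gcongr
        · exact mod_cast autWZ_pos
        · exact mod_cast Nat.descFactorial_le_pow n (v + q)
        · exact autWZ_le_card_rootedSubgraph_aut
    _ = n ^ q * mu n r J W Z := by rw [mu, pow_add]; ring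

theorem ExpSparse.attachment_nonempty (hr0 : 0 ≤ r) (hWZ : W ⊆ Z)
    (hJ : ExpSparse n (r / 2) (J.induce (Z : Set V))) (hmu : mu n r J W Z < 1) :
    (attachment J W Z).Nonempty := by
  by_contra hq
  have h2 := hJ.two_pow_eWZ_le hr0 hWZ
  rw [Finset.not_nonempty_iff_eq_empty.1 hq, Finset.card_empty, pow_zero, one_mul] at h2
  exact (one_le_pow₀ one_le_two).not_gt (h2.trans_lt hmu)

theorem ExpSparse.eWZ_le_mul_logb (hr0 : 0 ≤ r) (hWZ : W ⊆ Z)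
    (hJ : ExpSparse n (r / 2) (J.induce (Z : Set V))) (hmu : mu n r J W Z ≤ n) :
    (eWZ J W Z : ℝ) ≤ ((attachment J W Z).card + 1) * Real.logb 2 n := by
  have h2 : (2 : ℝ) ^ eWZ J W Z ≤ n ^ ((attachment J W Z).card + 1) :=
    (hJ.two_pow_eWZ_le hr0 hWZ).trans (by rw [pow_succ]; gcongr)
  have hlog := Real.logb_le_logb_of_le one_lt_two (by positivity) h2
  rwa [Real.logb_pow, Real.logb_pow, Real.logb_self_eq_one one_lt_two, mul_one, Nat.cast_add_one]
    at hlog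

end Sparse

section AutomorphismBound

variable {V : Type} [DecidableEq V] {n : ℕ} {r K : ℝ} {J : SimpleGraph V} {W Z : Finset V}

theorem min_card_sdiff_anti {W' : Finset V} (h : W ⊆ W') (L : ℝ) :
    min ((Z \ W').card : ℝ) L ≤ min ((Z \ W).card : ℝ) L :=
  min_le_min_right L (mod_cast Finset.card_le_card (Finset.sdiff_subset_sdiff subset_rfl h))

theorem exists_eWZ_insert_lt_and_autWZ_le (hr0 : 0 ≤ r) (hWZ : W ⊆ Z)
    (hJ : ExpSparse n (r / 2) (J.induce (Z : Set V))) (hmu : mu n r J W Z ≤ n)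
    (hq : (attachment J W Z).Nonempty)
    (hK : min ((Z \ W).card : ℝ) (2 * Real.logb 2 n) ≤ K) :
    ∃ z ∈ Z \ W, eWZ J (insert z W) Z < eWZ J W Z ∧
      (autWZ J W Z : ℝ) ≤ K * autWZ J (insert z W) Z := by
  obtain ⟨w, hw, hdeg⟩ :=
    exists_attachment_card_outerNeighbors_le hWZ hq (hJ.eWZ_le_mul_logb hr0 hWZ hmu)
  obtain ⟨hwW, z, hz, hwz⟩ := mem_attachment.1 hw
  refine ⟨z, hz, eWZ_insert_lt hWZ hwW hz hwz, ?_⟩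
  have hsdiff : (autWZ J W Z : ℝ) ≤ (Z \ W).card * autWZ J (insert z W) Z :=
    mod_cast autWZ_le_card_sdiff_mul_autWZ_insert hz
  have hneighbors : (autWZ J W Z : ℝ) ≤
      (outerNeighbors J W Z w).card * autWZ J (insert z W) Z :=
    mod_cast autWZ_le_card_mul_autWZ_insert fun _ hσ ↦
      apply_mem_outerNeighbors hσ hWZ hwW (mem_outerNeighbors.2 ⟨hz, hwz⟩)
  rcases min_le_iff.1 hK with hcard | hlog
  · exact hsdiff.trans (by gcongr)
  · exact hneighbors.trans (by gcongr; exact hdeg.trans hlog)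

theorem mul_autWZ_le_pow_eWZ {W : Finset V} (hr0 : 0 ≤ r) (hK1 : 1 ≤ K) (hWZ : W ⊂ Z)
    (hJ : ExpSparse n (r / 2) (J.induce (Z : Set V)))
    (hlead : ∀ Y, W ⊆ Y → Y ⊂ Z → mu n r J Y Z < 1)
    (hK : min ((Z \ W).card : ℝ) (2 * Real.logb 2 n) ≤ K) :
    K * autWZ J W Z ≤ K ^ eWZ J W Z := by
  have hmu := hlead W subset_rfl hWZ
  have hZ : Z.Nonempty := Finset.empty_ssubset.1 ((Finset.empty_subset W).trans_ssubset hWZ)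
  have hn : (1 : ℝ) ≤ n := mod_cast hJ.pos_of_nonempty hZ
  obtain ⟨z, hz, he, hle⟩ := exists_eWZ_insert_lt_and_autWZ_le hr0 hWZ.subset hJ
    (hmu.le.trans hn) (hJ.attachment_nonempty hr0 hWZ.subset hmu) hK
  rcases Nat.lt_or_ge 1 (Z \ W).card with hcard | hcard
  · have ih : K * autWZ J (insert z W) Z ≤ K ^ eWZ J (insert z W) Z :=
      mul_autWZ_le_pow_eWZ hr0 hK1 (insert_ssubset_of_one_lt_card_sdiff hWZ.subset hz hcard) hJ
        (fun Y hY ↦ hlead Y ((Finset.subset_insert z W).trans hY))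
        ((min_card_sdiff_anti (Finset.subset_insert z W) _).trans hK)
    calc K * autWZ J W Z ≤ K * (K * autWZ J (insert z W) Z) := by gcongr
      _ ≤ K * K ^ eWZ J (insert z W) Z := by gcongr
      _ = K ^ (eWZ J (insert z W) Z + 1) := (pow_succ' K _).symm
      _ ≤ K ^ eWZ J W Z := pow_le_pow_right₀ hK1 he
  · rw [autWZ_eq_one_of_card_sdiff_le_one hcard, Nat.cast_one, mul_one]
    exact le_self_pow₀ hK1 (Nat.ne_zero_of_lt he)
termination_by (Z \ W).card
decreasing_by exact (card_sdiff_insert_add_one hz).le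

theorem Leading.exists_autWZ_le_mul_autWZ_insert (hr0 : 0 ≤ r) (hr1 : r ≤ 1) (hWZ : W ⊆ Z)
    (hcard : 1 < (Z \ W).card) (hJ : ExpSparse n (r / 2) (J.induce (Z : Set V)))
    (hlead : Leading n r J W Z)
    (hK : min ((Z \ W).card : ℝ) (2 * Real.logb 2 n) ≤ K) :
    ∃ z ∈ Z \ W, (autWZ J W Z : ℝ) ≤ K * autWZ J (insert z W) Z := by
  obtain ⟨z, hz⟩ := Finset.card_pos.1 (zero_lt_one.trans hcard)
  obtain ⟨hzZ, hzW⟩ := Finset.mem_sdiff.1 hz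
  have hmu : mu n r J W Z ≤ n := by
    have hinsert := hlead _ (Finset.ssubset_insert hzW)
      (insert_ssubset_of_one_lt_card_sdiff hWZ hz hcard)
    exact (mu_le_mul_mu_insert hr0 hr1 hz).trans (mul_le_of_le_one_right (by positivity) hinsert.le)
  rcases (attachment J W Z).eq_empty_or_nonempty with hq | hq
  · -- With no attached roots, sparsity alone bounds the edges, which cover all of `Z \ W`.
    refine ⟨z, hz, ?_⟩
    have hlog : (eWZ J W Z : ℝ) ≤ Real.logb 2 n := by
      have he := hJ.eWZ_le_mul_logb hr0 hWZ hmu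
      rwa [hq, Finset.card_empty, Nat.cast_zero, zero_add, one_mul] at he
    have hv : ((Z \ W).card : ℝ) ≤ 2 * eWZ J W Z :=
      mod_cast hlead.card_sdiff_le_two_mul_eWZ (hJ.pos_of_nonempty ⟨z, hzZ⟩) hWZ hcard
    have hvK : ((Z \ W).card : ℝ) ≤ K := (le_min le_rfl (by linarith)).trans hK
    calc (autWZ J W Z : ℝ) ≤ (Z \ W).card * autWZ J (insert z W) Z :=
          mod_cast autWZ_le_card_sdiff_mul_autWZ_insert hz
      _ ≤ K * autWZ J (insert z W) Z := by gcongr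
  · obtain ⟨z, hz, -, hle⟩ := exists_eWZ_insert_lt_and_autWZ_le hr0 hWZ hJ hmu hq hK
    exact ⟨z, hz, hle⟩

theorem Leading.autWZ_le_pow_eWZ (hr0 : 0 ≤ r) (hr1 : r ≤ 1) (hK1 : 1 ≤ K) (hWZ : W ⊆ Z)
    (hJ : ExpSparse n (r / 2) (J.induce (Z : Set V))) (hlead : Leading n r J W Z)
    (hK : min ((Z \ W).card : ℝ) (2 * Real.logb 2 n) ≤ K) :
    (autWZ J W Z : ℝ) ≤ K ^ eWZ J W Z := by
  rcases Nat.lt_or_ge 1 (Z \ W).card with hcard | hcard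
  · obtain ⟨z, hz, hle⟩ := hlead.exists_autWZ_le_mul_autWZ_insert hr0 hr1 hWZ hcard hJ hK
    have hW : W ⊂ insert z W := Finset.ssubset_insert (Finset.mem_sdiff.1 hz).2
    calc (autWZ J W Z : ℝ) ≤ K * autWZ J (insert z W) Z := hle
      _ ≤ K ^ eWZ J (insert z W) Z :=
        mul_autWZ_le_pow_eWZ hr0 hK1 (insert_ssubset_of_one_lt_card_sdiff hWZ hz hcard) hJ
          (fun Y hY ↦ hlead Y (hW.trans_subset hY))
          ((min_card_sdiff_anti hW.subset _).trans hK)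
      _ ≤ K ^ eWZ J W Z := pow_le_pow_right₀ hK1 (eWZ_anti hW.subset)
  · rw [autWZ_eq_one_of_card_sdiff_le_one hcard, Nat.cast_one]
    exact one_le_pow₀ hK1

theorem Leading.pow_mul_pow_le (hr0 : 0 ≤ r) (hr1 : r ≤ 1) (hK1 : 1 ≤ K)
    {U : Finset V} (hWU : W ⊂ U) (hUZ : U ⊆ Z)
    (hJ : ExpSparse n (r / 2) (J.induce (Z : Set V))) (hlead : Leading n r J W Z)
    (hK : min ((Z \ W).card : ℝ) (2 * Real.logb 2 n) ≤ K) {k : ℕ} (hk : eWZ J U Z ≤ k) :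
    (n : ℝ) ^ (Z \ U).card * r ^ k ≤ K ^ k := by
  rcases hUZ.eq_or_ssubset with rfl | hUZ
  · rw [Finset.sdiff_self, Finset.card_empty, pow_zero, one_mul]
    exact pow_le_pow_left₀ hr0 (hr1.trans hK1) k
  · calc (n : ℝ) ^ (Z \ U).card * r ^ k ≤ n ^ (Z \ U).card * r ^ eWZ J U Z := by
          gcongr ?_ * ?_
          exact pow_le_pow_of_le_one hr0 hr1 hk
      _ ≤ autWZ J U Z := (mu_lt_one_iff.1 (hlead U hWU hUZ)).le
      _ ≤ K * autWZ J U Z := le_mul_of_one_le_left (Nat.cast_nonneg _) hK1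
      _ ≤ K ^ eWZ J U Z :=
        mul_autWZ_le_pow_eWZ hr0 hK1 hUZ hJ (fun Y hY ↦ hlead Y (hWU.trans_subset hY))
          ((min_card_sdiff_anti hWU.subset _).trans hK)
      _ ≤ K ^ k := pow_le_pow_right₀ hK1 hk

end AutomorphismBound


section RootedTree

/-- `f` maps `Z` onto the vertex set of a copy of a rooted graph `J[W,Z]`: it is injective on `Z`
and fixes the roots. Its values outside `Z` are irrelevant. -/
structure IsRootedMap {V : Type} (W Z : Finset V) (f : V → V) : Prop where
  injOn : Set.InjOn f Z
  apply_eq : ∀ w ∈ W, f w = w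

/-- `A` and `E` are the vertex and edge sets of a `[W,Z]`-tree, built up one copy of `J[W,Z]` at a
time. Contrary to the usual definition, an attached copy need not contribute a new edge. -/
inductive IsRootedTree {V : Type} (J : SimpleGraph V) (W Z : Finset V) :
    Set V → Set (Sym2 V) → Prop
  | copy {f : V → V} (hf : IsRootedMap W Z f) :
      IsRootedTree J W Z (f '' Z) (Sym2.map f '' rootedEdges J W Z)
  | attach {A : Set V} {E : Set (Sym2 V)} {f : V → V} (hT : IsRootedTree J W Z A E)
      (hf : IsRootedMap W Z f) (hE : (Sym2.map f '' rootedEdges J W Z ∩ E).Nonempty) :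
      IsRootedTree J W Z (A ∪ f '' Z) (E ∪ Sym2.map f '' rootedEdges J W Z)

variable {V : Type} {J : SimpleGraph V} {W Z : Finset V} {A : Set V} {E : Set (Sym2 V)}
  {f : V → V}

theorem IsRootedMap.subset_image (hf : IsRootedMap W Z f) (hWZ : W ⊆ Z) : (W : Set V) ⊆ f '' Z :=
  fun w hw ↦ ⟨w, hWZ hw, hf.apply_eq w hw⟩

theorem mem_image_of_mem_image_rootedEdges {e : Sym2 V} {x : V}
    (he : e ∈ Sym2.map f '' rootedEdges J W Z) (hx : x ∈ e) : x ∈ f '' Z := by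
  obtain ⟨e, he, rfl⟩ := he
  obtain ⟨y, hy, rfl⟩ := Sym2.mem_map.1 hx
  exact ⟨y, he.2.1 y hy, rfl⟩

theorem IsRootedTree.roots_subset (hT : IsRootedTree J W Z A E) (hWZ : W ⊆ Z) :
    (W : Set V) ⊆ A := by
  induction hT with
  | copy hf => exact hf.subset_image hWZ
  | attach _ _ _ ih => exact Set.subset_union_of_subset_left ih _

theorem IsRootedTree.mem_of_mem_edge (hT : IsRootedTree J W Z A E) {e : Sym2 V} {x : V}
    (he : e ∈ E) (hx : x ∈ e) : x ∈ A := by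
  induction hT with
  | copy _ => exact mem_image_of_mem_image_rootedEdges he hx
  | attach _ _ _ ih =>
    exact he.imp (fun he ↦ ih he) fun he ↦ mem_image_of_mem_image_rootedEdges he hx

theorem IsRootedTree.finite (hT : IsRootedTree J W Z A E) : A.Finite ∧ E.Finite := by
  induction hT with
  | copy _ => exact ⟨Z.finite_toSet.image _, (rootedEdges_finite J W Z).image _⟩
  | attach _ _ _ ih =>
    exact ⟨ih.1.union (Z.finite_toSet.image _), ih.2.union ((rootedEdges_finite J W Z).image _)⟩

open Classical in
/-- The vertices of `Z` along which the copy `f '' Z` is glued to the vertex set `A` of a tree. -/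
noncomputable def gluedPart (Z : Finset V) (f : V → V) (A : Set V) : Finset V := {z ∈ Z | f z ∈ A}

theorem mem_gluedPart {z : V} : z ∈ gluedPart Z f A ↔ z ∈ Z ∧ f z ∈ A := by
  simp only [gluedPart, Finset.mem_filter]

theorem gluedPart_subset : gluedPart Z f A ⊆ Z :=
  fun _ hz ↦ (mem_gluedPart.1 hz).1

theorem IsRootedTree.ssubset_gluedPart (hT : IsRootedTree J W Z A E) (hWZ : W ⊆ Z)
    (hf : IsRootedMap W Z f) (hE : (Sym2.map f '' rootedEdges J W Z ∩ E).Nonempty) :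
    W ⊂ gluedPart Z f A := by
  obtain ⟨_, ⟨e, he, rfl⟩, heE⟩ := hE
  have hglued {x : V} (hx : x ∈ e) : x ∈ gluedPart Z f A :=
    mem_gluedPart.2 ⟨he.2.1 x hx, hT.mem_of_mem_edge heE (Sym2.mem_map.2 ⟨x, hx, rfl⟩)⟩
  refine Finset.ssubset_iff_subset_ne.2 ⟨fun w hw ↦ mem_gluedPart.2 ⟨hWZ hw, ?_⟩, fun h ↦ ?_⟩
  · exact (hf.apply_eq w hw).symm ▸ hT.roots_subset hWZ hw
  · exact he.2.2 fun x hx ↦ h ▸ hglued hx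

theorem IsRootedTree.eWZ_gluedPart_le (hT : IsRootedTree J W Z A E)
    (hf : IsRootedMap W Z f) (hW : W ⊆ gluedPart Z f A) :
    eWZ J (gluedPart Z f A) Z ≤ (Sym2.map f '' rootedEdges J W Z \ E).ncard := by
  rw [← ncard_image_map_rootedEdges hf.injOn]
  refine Set.ncard_le_ncard ?_ (((rootedEdges_finite J W Z).image _).sdiff)
  rintro _ ⟨e, he, rfl⟩
  refine ⟨⟨e, rootedEdges_anti hW he, rfl⟩, fun heE ↦ he.2.2 fun x hx ↦ ?_⟩
  exact mem_gluedPart.2 ⟨he.2.1 x hx, hT.mem_of_mem_edge heE (Sym2.mem_map.2 ⟨x, hx, rfl⟩)⟩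

theorem IsRootedTree.edges_eq_empty (hT : IsRootedTree J W Z A E) (hZ : Z.card ≤ 1) : E = ∅ := by
  induction hT with
  | copy _ => rw [rootedEdges_eq_empty_of_card_le_one hZ, Set.image_empty]
  | attach _ _ _ ih =>
    rw [ih, rootedEdges_eq_empty_of_card_le_one hZ, Set.image_empty, Set.union_empty]

variable [DecidableEq V]

theorem IsRootedMap.image_sdiff_roots (hf : IsRootedMap W Z f) (hWZ : W ⊆ Z) :
    f '' Z \ W = f '' ((Z \ W : Finset V) : Set V) := by
  rw [Finset.coe_sdiff, (hf.injOn).image_sdiff_subset (Finset.coe_subset.2 hWZ),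
    Set.image_congr (g := id) fun w hw ↦ hf.apply_eq w hw, Set.image_id]

theorem IsRootedMap.ncard_image_sdiff_roots (hf : IsRootedMap W Z f) (hWZ : W ⊆ Z) :
    (f '' Z \ W).ncard = (Z \ W).card := by
  rw [hf.image_sdiff_roots hWZ, (hf.injOn.mono (mod_cast Finset.sdiff_subset)).ncard_image,
    Set.ncard_coe_finset]

theorem ncard_union_image_sdiff {B : Set V} (hf : Set.InjOn f Z) (hA : A.Finite) (hBA : B ⊆ A) :
    ((A ∪ f '' Z) \ B).ncard = (A \ B).ncard + (Z \ gluedPart Z f A).card := by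
  have hnew : f '' ((Z \ gluedPart Z f A : Finset V) : Set V) = f '' Z \ A := by
    ext y
    constructor
    · rintro ⟨z, hz, rfl⟩
      obtain ⟨hzZ, hz⟩ := Finset.mem_sdiff.1 hz
      exact ⟨⟨z, hzZ, rfl⟩, fun hA ↦ hz (mem_gluedPart.2 ⟨hzZ, hA⟩)⟩
    · rintro ⟨⟨z, hz, rfl⟩, hA⟩
      exact ⟨z, Finset.mem_sdiff.2 ⟨hz, fun h ↦ hA (mem_gluedPart.1 h).2⟩, rfl⟩
  have hunion : (A ∪ f '' Z) \ B = (A \ B) ∪ (f '' Z \ A) := by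
    rw [← Set.union_sdiff_self, Set.union_sdiff_distrib,
      (Set.disjoint_sdiff_left.mono_right hBA).sdiff_eq_left]
  rw [hunion, Set.ncard_union_eq (Set.disjoint_sdiff_right.mono_left Set.sdiff_subset) hA.sdiff
    ((Z.finite_toSet.image f).sdiff), ← hnew,
    (hf.mono (mod_cast Finset.sdiff_subset)).ncard_image, Set.ncard_coe_finset]

variable {n : ℕ} {r K : ℝ}

theorem IsRootedTree.pow_mul_pow_le (hT : IsRootedTree J W Z A E) (hr0 : 0 ≤ r) (hr1 : r ≤ 1)
    (hK1 : 1 ≤ K) (hWZ : W ⊆ Z) (hJ : ExpSparse n (r / 2) (J.induce (Z : Set V)))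
    (hlead : Leading n r J W Z) (hK : min ((Z \ W).card : ℝ) (2 * Real.logb 2 n) ≤ K) :
    (n : ℝ) ^ (A \ W).ncard * r ^ E.ncard ≤ mu n r J W Z * K ^ E.ncard := by
  induction hT with
  | copy hf =>
    rw [hf.ncard_image_sdiff_roots hWZ, ncard_image_map_rootedEdges hf.injOn, mu,
      div_mul_eq_mul_div, le_div_iff₀ (mod_cast autWZ_pos)]
    gcongr
    exact hlead.autWZ_le_pow_eWZ hr0 hr1 hK1 hWZ hJ hK
  | @attach A E f hT hf hE ih =>
    set R := Sym2.map f '' rootedEdges J W Z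
    have hWU : W ⊂ gluedPart Z f A := hT.ssubset_gluedPart hWZ hf hE
    have hedges : (E ∪ R).ncard = E.ncard + (R \ E).ncard := by
      rw [← Set.union_sdiff_self, Set.ncard_union_eq Set.disjoint_sdiff_right hT.finite.2
        ((rootedEdges_finite J W Z).image _).sdiff]
    have hcopy : (n : ℝ) ^ (Z \ gluedPart Z f A).card * r ^ (R \ E).ncard ≤ K ^ (R \ E).ncard :=
      hlead.pow_mul_pow_le hr0 hr1 hK1 hWU gluedPart_subset hJ hK
        (hT.eWZ_gluedPart_le hf hWU.subset)
    rw [ncard_union_image_sdiff hf.injOn hT.finite.1 (hT.roots_subset hWZ), hedges, pow_add,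
      pow_add, pow_add, mul_mul_mul_comm, ← mul_assoc (mu n r J W Z)]
    exact mul_le_mul ih hcopy (by positivity) (le_trans (by positivity) ih)

theorem IsRootedTree.pow_mul_pow_le_mul_min_pow {C : ℝ} (hT : IsRootedTree J W Z A E) (hr0 : 0 ≤ r)
    (hr1 : r ≤ 1) (hC : 2 ≤ C) (hWZ : W ⊂ Z)
    (hJ : ExpSparse n (r / 2) (J.induce (Z : Set V))) (hlead : Leading n r J W Z) :
    (n : ℝ) ^ (A \ W).ncard * r ^ E.ncard ≤
      mu n r J W Z * min ((Z \ W).card : ℝ) (C * Real.logb 2 n) ^ E.ncard := by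
  rcases Nat.lt_or_ge 1 n with hn | hn
  · have hlog : 1 ≤ Real.logb 2 n := by
      rw [Real.le_logb_iff_rpow_le one_lt_two (by positivity), Real.rpow_one]
      exact mod_cast hn
    have hcard : (1 : ℝ) ≤ (Z \ W).card :=
      mod_cast (Finset.sdiff_nonempty.2 hWZ.not_subset).card_pos
    have hlogC : 1 ≤ C * Real.logb 2 n := one_le_mul_of_one_le_of_one_le (one_le_two.trans hC) hlog
    exact hT.pow_mul_pow_le hr0 hr1 (le_min hcard hlogC) hWZ.subset hJ hlead
      (min_le_min_left _ (by gcongr))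
  · have hlog : 2 * Real.logb 2 n ≤ 1 := by
      have := Real.logb_nonpos one_lt_two n.cast_nonneg (Nat.cast_le_one.2 hn)
      linarith
    have h1 := hT.pow_mul_pow_le hr0 hr1 le_rfl hWZ.subset hJ hlead (min_le_of_right_le hlog)
    rw [hT.edges_eq_empty (hJ.card_finset_le.trans hn), Set.ncard_empty, pow_zero] at h1 ⊢
    rwa [pow_zero]

end RootedTree

section Chain

theorem iUnion_fin_lt_succ {α : Type*} {m k : ℕ} (g : Fin m → Set α) (hk : k < m) :
    (⋃ j : Fin m, ⋃ _ : (j : ℕ) < k + 1, g j) =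
      (⋃ j : Fin m, ⋃ _ : (j : ℕ) < k, g j) ∪ g ⟨k, hk⟩ := by
  ext x
  simp only [Set.mem_iUnion, Set.mem_union, exists_prop, Nat.lt_succ_iff_lt_or_eq, or_and_right,
    exists_or]
  refine or_congr_right ⟨?_, fun hx ↦ ⟨⟨k, hk⟩, rfl, hx⟩⟩
  rintro ⟨j, rfl, hx⟩
  exact hx

variable {V : Type} {J : SimpleGraph V} {W Z : Finset V} {m : ℕ} {ψ : Fin m → V → V}

theorem isRootedTree_iUnion_lt (hψ : ∀ i, IsRootedMap W Z (ψ i))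
    (hchain : ∀ i : Fin m, 0 < (i : ℕ) → ((Sym2.map (ψ i) '' rootedEdges J W Z) ∩
      (⋃ j : Fin m, ⋃ _ : (j : ℕ) < (i : ℕ), Sym2.map (ψ j) '' rootedEdges J W Z)).Nonempty)
    {k : ℕ} (hk : 1 ≤ k) (hkm : k ≤ m) :
    IsRootedTree J W Z (⋃ j : Fin m, ⋃ _ : (j : ℕ) < k, ψ j '' Z)
      (⋃ j : Fin m, ⋃ _ : (j : ℕ) < k, Sym2.map (ψ j) '' rootedEdges J W Z) := by
  induction k, hk using Nat.le_induction with
  | base =>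
    rw [iUnion_fin_lt_succ _ hkm, iUnion_fin_lt_succ _ hkm]
    simpa only [Nat.not_lt_zero, Set.iUnion_false, Set.iUnion_empty, Set.empty_union] using
      IsRootedTree.copy (hψ ⟨0, hkm⟩)
  | succ k hk ih =>
    rw [iUnion_fin_lt_succ _ hkm, iUnion_fin_lt_succ _ hkm]
    exact (ih (Nat.le_of_succ_le hkm)).attach (hψ ⟨k, hkm⟩) (hchain ⟨k, hkm⟩ hk)

theorem isRootedTree_iUnion (hm : 0 < m) (hψ : ∀ i, IsRootedMap W Z (ψ i))
    (hchain : ∀ i : Fin m, 0 < (i : ℕ) → ((Sym2.map (ψ i) '' rootedEdges J W Z) ∩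
      (⋃ j : Fin m, ⋃ _ : (j : ℕ) < (i : ℕ), Sym2.map (ψ j) '' rootedEdges J W Z)).Nonempty) :
    IsRootedTree J W Z (⋃ i, ψ i '' Z) (⋃ i, Sym2.map (ψ i) '' rootedEdges J W Z) := by
  simpa only [Fin.is_lt, Set.iUnion_true] using isRootedTree_iUnion_lt hψ hchain hm le_rfl

end Chain

theorem tree_labeled_expectation_bound_general {V : Type} [DecidableEq V] {n : ℕ} {r C : ℝ}
    (hr0 : 0 ≤ r) (hr1 : r ≤ 1) (hC : 2 ≤ C) (J : SimpleGraph V) (W Z : Finset V) (hWZ : W ⊂ Z)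
    (hlead : Leading n r J W Z) (hsparse : ExpSparse n (r / 2) (J.induce (Z : Set V)))
    (m : ℕ) (hm : 0 < m) (ψ : Fin m → V → V)
    (hinj : ∀ i, Set.InjOn (ψ i) (Z : Set V)) (hfix : ∀ i, ∀ w ∈ W, ψ i w = w)
    (hchain : ∀ i : Fin m, 0 < (i : ℕ) → ((Sym2.map (ψ i) '' rootedEdges J W Z) ∩
      (⋃ j : Fin m, ⋃ _ : (j : ℕ) < (i : ℕ), Sym2.map (ψ j) '' rootedEdges J W Z)).Nonempty) :
    (n : ℝ) ^ (Nat.card (((⋃ i, ψ i '' (Z : Set V)) \ (W : Set V) : Set V))) *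
        r ^ (Nat.card (⋃ i, Sym2.map (ψ i) '' rootedEdges J W Z)) ≤
      mu n r J W Z * (min (((Z \ W).card : ℝ)) (C * Real.logb 2 n)) ^
        (Nat.card (⋃ i, Sym2.map (ψ i) '' rootedEdges J W Z)) := by
  have hT := isRootedTree_iUnion hm (fun i ↦ ⟨hinj i, hfix i⟩) hchain
  exact hT.pow_mul_pow_le_mul_min_pow hr0 hr1 hC hWZ hsparse hlead

/-- Lemma 3.4: if `J[W,Z]` is `r`-leading and `J[Z]` is `(r/2)`-sparse, then for any
`[W,Z]`-tree `T` (a union of copies `ψ i` of `J[W,Z]` rooted at `W`, each sharing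
some but not all of its edges with the union of the earlier copies),
`n^{v(W,V(T))} r^{e_T} ≤ μ_r(W,Z) · min{v(W,Z), 16 log₂ n}^{e_T}`. -/
theorem tree_labeled_expectation_bound {n : ℕ} {r : ℝ} (hr0 : 0 ≤ r) (hr1 : r ≤ 1)
    (J : SimpleGraph (Fin n)) (W Z : Finset (Fin n)) (hWZ : W ⊂ Z)
    (hlead : Leading n r J W Z)
    (hsparse : ExpSparse n (r / 2) (J.induce (Z : Set (Fin n))))
    (m : ℕ) (hm : 0 < m) (ψ : Fin m → Fin n → Fin n)
    (hinj : ∀ i, Set.InjOn (ψ i) (Z : Set (Fin n)))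
    (hfix : ∀ i, ∀ w ∈ W, ψ i w = w)
    (hchain : ∀ i : Fin m, 0 < (i : ℕ) →
      ((Sym2.map (ψ i) '' rootedEdges J W Z) ∩
        (⋃ j : Fin m, ⋃ _ : (j : ℕ) < (i : ℕ), Sym2.map (ψ j) '' rootedEdges J W Z)).Nonempty ∧
      ¬ (Sym2.map (ψ i) '' rootedEdges J W Z ⊆
        ⋃ j : Fin m, ⋃ _ : (j : ℕ) < (i : ℕ), Sym2.map (ψ j) '' rootedEdges J W Z)) :
    (n : ℝ) ^ (Nat.card (((⋃ i, ψ i '' (Z : Set (Fin n))) \ (W : Set (Fin n)) : Set (Fin n)))) *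
        r ^ (Nat.card (⋃ i, Sym2.map (ψ i) '' rootedEdges J W Z)) ≤
      mu n r J W Z *
        (min (((Z \ W).card : ℝ)) (16 * Real.logb 2 n)) ^
          (Nat.card (⋃ i, Sym2.map (ψ i) '' rootedEdges J W Z)) := by
  exact tree_labeled_expectation_bound_general hr0 hr1 (by norm_num) J W Z hWZ hlead hsparse m hm ψ
    hinj hfix fun i hi ↦ (hchain i hi).1
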